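/- Let G=(V,E_L,E_R) and G'=(V',E'_L,E'_R) be achievement positional games with V∩V'=∅. If Left has a winning strategy on G as first player and Right has a winning strategy on G' as first player, then at least one of Left and Right has a winning strategy on the disjoint union G∪G' as first player. -/

import Mathlib

namespace APG

/-- The two players: Left and Right. -/
inductive Player : Type
  | L : Player
  | R : Player
deriving DecidableEq, Repr

/-- The opponent of a player. -/
def Player.other : Player → Player
  | .L => .R
  | .R => .L

/-- An achievement positional game: a finite vertex set together with the set of
blue edges (Left's winning sets) and the set of red edges (Right's winning sets). -/
structure Game : Type where
  V : Finset ℕ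
  EL : Finset (Finset ℕ)
  ER : Finset (Finset ℕ)

/-- The edges are nonempty subsets of the vertex set. -/
def WellFormed (G : Game) : Prop :=
  (∀ e ∈ G.EL, e ⊆ G.V ∧ e.Nonempty) ∧ (∀ e ∈ G.ER, e ⊆ G.V ∧ e.Nonempty)

/-- The winning sets of a given player. -/
def Game.edges (G : Game) : Player → Finset (Finset ℕ)
  | .L => G.EL
  | .R => G.ER

/-- The player who makes the `i`-th move (0-indexed) when `s` moves first. -/
def mover (s : Player) (i : ℕ) : Player := if i % 2 = 0 then s else s.other

/-- The set of vertices picked by player `p` along the history `h`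
(the chronological list of the moves played so far), when `s` moved first. -/
def picked (s p : Player) (h : List ℕ) : Finset ℕ :=
  ((Finset.range h.length).filter fun i => mover s i = p).image fun i => h.getD i 0

/-- The set `S` of picked vertices fills some edge of `E`. -/
def fills (E : Finset (Finset ℕ)) (S : Finset ℕ) : Prop := ∃ e ∈ E, e ⊆ S

/-- The game is over: some player has picked all the vertices of one of their edges. -/
def ended (G : Game) (s : Player) (h : List ℕ) : Prop :=
  fills G.EL (picked s .L h) ∨ fills G.ER (picked s .R h)

/-- `h` is a legal history: no vertex is picked twice, every picked vertex belongs to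
the board, and no move is made after the game has ended. -/
def ValidHist (G : Game) (s : Player) (h : List ℕ) : Prop :=
  h.Nodup ∧ (∀ x ∈ h, x ∈ G.V) ∧ ∀ k, k < h.length → ¬ ended G s (h.take k)

/-- A strategy: a map assigning to each position (history) a vertex to pick. -/
abbrev Strategy := List ℕ → ℕ

/-- Along `h`, every move of player `p` agrees with the strategy `σ`. -/
def Follows (s p : Player) (σ : Strategy) (h : List ℕ) : Prop :=
  ∀ k, k < h.length → mover s k = p → h.getD k 0 = σ (h.take k)

/-- A finished play: either the game has ended or all vertices have been picked. -/
def Complete (G : Game) (s : Player) (h : List ℕ) : Prop :=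
  ended G s h ∨ h.length = G.V.card

/-- The strategy `σ` of player `p` always suggests a legal move (an unpicked vertex)
whenever the game is not over and it is `p`'s turn. -/
def Legal (G : Game) (s p : Player) (σ : Strategy) : Prop :=
  ∀ h, ValidHist G s h → Follows s p σ h → ¬ ended G s h → h.length < G.V.card →
    mover s h.length = p → σ h ∈ G.V ∧ σ h ∉ h

/-- Player `p` has a winning strategy on `G` when `s` moves first: following it,
every finished play ends with `p` having filled one of their edges (and, the game
having ended right there, the opponent has not filled an edge first). -/
def WinsAs (G : Game) (s p : Player) : Prop :=
  ∃ σ : Strategy, Legal G s p σ ∧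
    ∀ h, ValidHist G s h → Follows s p σ h → Complete G s h →
      fills (G.edges p) (picked s p h)

/-- Player `p` has a non-losing strategy on `G` when `s` moves first: following it,
the opponent never fills one of their edges. -/
def NonLosingAs (G : Game) (s p : Player) : Prop :=
  ∃ σ : Strategy, Legal G s p σ ∧
    ∀ h, ValidHist G s h → Follows s p σ h → Complete G s h →
      ¬ fills (G.edges p.other) (picked s p.other h)

/-- The possible results of the game, for a fixed starting player. -/
inductive Result : Type
  | Lwin : Result
  | draw : Result
  | Rwin : Result
deriving DecidableEq, Repr

/-- The result of `G` with optimal play, when `s` moves first, is `r`: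
a win for a player means that player has a winning strategy, a draw means
both players have non-losing strategies. -/
def resultIs (G : Game) (s : Player) : Result → Prop
  | .Lwin => WinsAs G s .L
  | .Rwin => WinsAs G s .R
  | .draw => NonLosingAs G s .L ∧ NonLosingAs G s .R

/-- An outcome: the pair of results with optimal play
(when Left starts, when Right starts). -/
abbrev Outcome := Result × Result

/-- `G` has outcome `o`. -/
def hasOutcome (G : Game) (o : Outcome) : Prop :=
  resultIs G .L o.1 ∧ resultIs G .R o.2

/-- Numerical value of a result, from Left's point of view:
Right wins < draw < Left wins. -/
def Result.val : Result → ℕ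
  | .Rwin => 0
  | .draw => 1
  | .Lwin => 2

/-- The partial order `≤_L` on outcomes, comparing both components simultaneously
from Left's point of view. -/
def outLE (o o' : Outcome) : Prop := o.1.val ≤ o'.1.val ∧ o.2.val ≤ o'.2.val

def oL : Outcome := (.Lwin, .Lwin)
def oLminus : Outcome := (.Lwin, .draw)
def oN : Outcome := (.Lwin, .Rwin)
def oD : Outcome := (.draw, .draw)
def oRminus : Outcome := (.draw, .Rwin)
def oR : Outcome := (.Rwin, .Rwin)

/-- The updated game `G_u` after Left has picked `u`. -/
def subL (G : Game) (u : ℕ) : Game where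
  V := G.V.erase u
  EL := G.EL.image fun e => e.erase u
  ER := G.ER.filter fun e => u ∉ e

/-- The updated game `G^u` after Right has picked `u`. -/
def subR (G : Game) (u : ℕ) : Game where
  V := G.V.erase u
  EL := G.EL.filter fun e => u ∉ e
  ER := G.ER.image fun e => e.erase u

/-- The updated game `G_u^v` after Left has picked `u` and Right has picked `v`. -/
def updLR (G : Game) (u v : ℕ) : Game where
  V := (G.V.erase u).erase v
  EL := (G.EL.filter fun e => v ∉ e).image fun e => e.erase u
  ER := (G.ER.filter fun e => u ∉ e).image fun e => e.erase v

/-- The disjoint union of two games. -/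
def gunion (G G' : Game) : Game where
  V := G.V ∪ G'.V
  EL := G.EL ∪ G'.EL
  ER := G.ER ∪ G'.ER


/-!
Passing never helps the opponent of a player with a winning strategy, who may pretend that the pass
was an arbitrary pick. So a first-player win has a speed: the least `k` such that the player can
win without letting the opponent pass more than `k` times. On the union, the player whose win is
the faster one starts, on their own component. Before each of their moves there they can win it
within `k` passes, while the opponent cannot win the other component within fewer than `k`. An
opponent's move on the other component is a pass on the first, and lowers `k` by one; but either
some answer on the other component keeps the opponent as slow there, or leaving the move unanswered
gains the opponent only one step too. So the first player stays ahead in the race.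
-/

theorem Player.other_ne (p : Player) : p.other ≠ p := by cases p <;> decide

theorem Player.other_other (p : Player) : p.other.other = p := by cases p <;> rfl

theorem Player.eq_or_eq_other (p q : Player) : q = p ∨ q = p.other := by
  cases p <;> cases q <;> decide

theorem Player.forall_iff {P : Player → Prop} (p : Player) : (∀ q, P q) ↔ P p ∧ P p.other :=
  ⟨fun h ↦ ⟨h p, h p.other⟩, fun h q ↦ (p.eq_or_eq_other q).elim (· ▸ h.1) (· ▸ h.2)⟩

theorem WellFormed.edges {G : Game} (hG : WellFormed G) (p : Player) :
    ∀ e ∈ G.edges p, e ⊆ G.V ∧ e.Nonempty := by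
  cases p
  · exact hG.1
  · exact hG.2

theorem gunion_comm (G G' : Game) : gunion G G' = gunion G' G := by
  simp only [gunion, Finset.union_comm]

theorem edges_gunion (G G' : Game) (p : Player) :
    (gunion G G').edges p = G.edges p ∪ G'.edges p := by
  cases p <;> rfl

/-- A position of a game: the set of vertices each player has picked. Whose turn it is, and on
which board, is left to the context, so that one position can be read on several boards. -/
abbrev Position : Type := Player → Finset ℕ

namespace Position

/-- The position reached from `c` when `p` picks `x`. -/
def claim (c : Position) (p : Player) (x : ℕ) : Position :=
  Function.update c p (insert x (c p))

variable {c : Position} {p q : Player} {x y : ℕ}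

theorem mem_claim : y ∈ c.claim p x q ↔ (q = p ∧ y = x) ∨ y ∈ c q := by
  rcases eq_or_ne q p with rfl | hne <;> simp [claim, *]

theorem claim_of_ne (h : q ≠ p) : c.claim p x q = c q := by simp [claim, h]

theorem claim_comm : (c.claim p x).claim q y = (c.claim q y).claim p x := by
  ext r z
  simp only [mem_claim]
  tauto

end Position

namespace Game

variable {G G' : Game} {c c' : Position} {p q : Player} {x : ℕ}

/-- The vertices of the board of `G` that nobody has picked at `c`. -/
def free (G : Game) (c : Position) : Finset ℕ := G.V \ (c .L ∪ c .R)

/-- At the position `c`, the player `p` has filled one of their edges in `G`. -/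
def HasWon (G : Game) (p : Player) (c : Position) : Prop := fills (G.edges p) (c p)

theorem mem_free : x ∈ G.free c ↔ x ∈ G.V ∧ ∀ q, x ∉ c q := by
  rw [free, Finset.mem_sdiff, Finset.mem_union, not_or, Player.forall_iff .L]
  rfl

theorem mem_free_iff (p : Player) : x ∈ G.free c ↔ x ∈ G.V ∧ x ∉ c p ∧ x ∉ c p.other := by
  rw [mem_free, Player.forall_iff p]

theorem free_claim : G.free (c.claim p x) = (G.free c).erase x := by
  ext y
  simp only [mem_free, Finset.mem_erase, Position.mem_claim, not_or, not_and, forall_and,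
    forall_eq]
  tauto

theorem free_claim_of_notMem (hx : x ∉ G.V) : G.free (c.claim p x) = G.free c := by
  rw [free_claim, Finset.erase_eq_of_notMem fun h ↦ hx (mem_free.1 h).1]

theorem card_free_claim_lt (hx : x ∈ G.free c) : (G.free (c.claim p x)).card < (G.free c).card :=
  free_claim (G := G) ▸ Finset.card_erase_lt_of_mem hx

theorem mem_free_gunion : x ∈ (gunion G G').free c ↔ x ∈ G.free c ∨ x ∈ G'.free c := by
  simp only [mem_free, gunion, Finset.mem_union, or_and_right]

theorem hasWon_gunion : (gunion G G').HasWon p c ↔ G.HasWon p c ∨ G'.HasWon p c := by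
  simp only [HasWon, fills, edges_gunion, Finset.mem_union, or_and_right, exists_or]

theorem HasWon.mono (hG : WellFormed G) (h : G.HasWon p c)
    (hcc' : ∀ x ∈ G.V, x ∈ c p → x ∈ c' p) : G.HasWon p c' := by
  obtain ⟨e, he, hec⟩ := h
  exact ⟨e, he, fun x hx ↦ hcc' x ((hG.edges p e he).1 hx) (hec hx)⟩

theorem hasWon_claim_of_ne (h : q ≠ p) : G.HasWon q (c.claim p x) ↔ G.HasWon q c := by
  rw [HasWon, HasWon, Position.claim_of_ne h]

theorem hasWon_claim_of_notMem (hG : WellFormed G) (hx : x ∉ G.V) :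
    G.HasWon q (c.claim p x) ↔ G.HasWon q c := by
  constructor <;> refine fun h ↦ h.mono hG fun y hy ↦ ?_ <;>
    simp [Position.mem_claim, ne_of_mem_of_not_mem hy hx]

theorem not_hasWon_bot (hG : WellFormed G) : ¬ G.HasWon p ⊥ := by
  rintro ⟨e, he, hsub⟩
  exact (hG.edges p e he).2.ne_empty (Finset.subset_empty.1 hsub)

end Game

/-- The player `p`, who is to move at `c`, can force a win in `G` even if their opponent is
allowed to pass, and the opponent cannot pass more than `k` times before losing. -/
inductive WinsDespitePasses (G : Game) (p : Player) : ℕ → Position → Prop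
  | win {k : ℕ} {c : Position} (u : ℕ) (hu : u ∈ G.free c) (hsafe : ¬ G.HasWon p.other c)
      (hwin : G.HasWon p (c.claim p u)) : WinsDespitePasses G p k c
  | step {k : ℕ} {c : Position} (u : ℕ) (hu : u ∈ G.free c) (hsafe : ¬ G.HasWon p.other c)
      (hreply : ∀ v ∈ G.free (c.claim p u),
        WinsDespitePasses G p (k + 1) ((c.claim p u).claim p.other v))
      (hpass : WinsDespitePasses G p k (c.claim p u)) : WinsDespitePasses G p (k + 1) c

namespace WinsDespitePasses

variable {G : Game} {p q : Player} {k l : ℕ} {c c' : Position} {x : ℕ}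

theorem not_hasWon_other (h : WinsDespitePasses G p k c) : ¬ G.HasWon p.other c := by
  cases h <;> assumption

theorem free_nonempty (h : WinsDespitePasses G p k c) : (G.free c).Nonempty := by
  cases h <;> exact ⟨_, ‹_›⟩

theorem mono (h : WinsDespitePasses G p k c) (hkl : k ≤ l) : WinsDespitePasses G p l c := by
  induction h generalizing l with
  | win u hu hsafe hwin => exact .win u hu hsafe hwin
  | step u hu hsafe _ _ ihreply ihpass =>
    obtain ⟨l, rfl⟩ := Nat.exists_eq_succ_of_ne_zero (by lia : l ≠ 0)
    exact .step u hu hsafe (fun v hv ↦ ihreply v hv hkl) (ihpass (by lia))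

/-- An opponent who picks, at `c'`, a vertex that they already own at `c` has in effect passed at
`c`. -/
theorem anti_position (hG : WellFormed G) (h : WinsDespitePasses G p k c)
    (hp : ∀ x ∈ G.V, x ∈ c' p ↔ x ∈ c p) (ho : ∀ x ∈ G.V, x ∈ c' p.other → x ∈ c p.other) :
    WinsDespitePasses G p k c' := by
  have hfree {c c' : Position} (hp : ∀ x ∈ G.V, x ∈ c' p ↔ x ∈ c p)
      (ho : ∀ x ∈ G.V, x ∈ c' p.other → x ∈ c p.other) {u : ℕ} (hu : u ∈ G.free c) :
      u ∈ G.free c' := by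
    rw [Game.mem_free_iff p] at hu ⊢
    grind
  induction h generalizing c' with
  | win u hu hsafe hwin =>
    exact .win u (hfree hp ho hu) (fun hw ↦ hsafe (hw.mono hG ho))
      (hwin.mono hG (by grind [Position.mem_claim]))
  | @step k c u hu hsafe _ _ ihreply ihpass =>
    refine .step u (hfree hp ho hu) (fun hw ↦ hsafe (hw.mono hG ho)) (fun v hv ↦ ?_)
      (ihpass (by grind [Position.mem_claim]) (by grind [Position.mem_claim]))
    by_cases hvc : v ∈ c p.other
    · exact (ihpass (by grind [Position.mem_claim, Player.other_ne])
        (by grind [Position.mem_claim])).mono k.le_succ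
    · have hv' : v ∈ G.free (c.claim p u) := by
        rw [Game.mem_free_iff p] at hv ⊢
        grind [Position.mem_claim, Player.other_ne]
      exact ihreply v hv' (by grind [Position.mem_claim]) (by grind [Position.mem_claim])

theorem claim_iff_of_notMem (hG : WellFormed G) (hx : x ∉ G.V) :
    WinsDespitePasses G p k (c.claim q x) ↔ WinsDespitePasses G p k c := by
  constructor <;>
  · refine fun h ↦ h.anti_position hG ?_ ?_ <;> intro y hy <;>
      simp [Position.mem_claim, ne_of_mem_of_not_mem hy hx]

end WinsDespitePasses

/-- The counterpart of `WinsDespitePasses` for a position `c` where the opponent of `p` is to move.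
The index is such that `p` wins from `c` with index `k` as soon as the opponent passes, while any
pick by the opponent leaves `p` with index `k + 1`. -/
structure AwaitsReply (G : Game) (p : Player) (k : ℕ) (c : Position) : Prop where
  reply : ∀ v ∈ G.free c, WinsDespitePasses G p (k + 1) (c.claim p.other v)
  pass : WinsDespitePasses G p k c

namespace AwaitsReply

variable {G : Game} {p q : Player} {k : ℕ} {c : Position} {x : ℕ}

theorem winsDespitePasses {u : ℕ} (h : AwaitsReply G p k (c.claim p u)) (hu : u ∈ G.free c)
    (hsafe : ¬ G.HasWon p.other c) : WinsDespitePasses G p (k + 1) c :=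
  .step u hu hsafe h.reply h.pass

theorem claim_of_notMem (hG : WellFormed G) (h : AwaitsReply G p k c) (hx : x ∉ G.V) :
    AwaitsReply G p k (c.claim q x) where
  reply v hv := by
    rw [Position.claim_comm, WinsDespitePasses.claim_iff_of_notMem hG hx]
    exact h.reply v (Game.free_claim_of_notMem hx ▸ hv)
  pass := (WinsDespitePasses.claim_iff_of_notMem hG hx).2 h.pass

end AwaitsReply

namespace WinsDespitePasses

variable {G G' : Game} {p : Player} {k : ℕ} {c : Position}

theorem exists_move (h : WinsDespitePasses G p k c) :
    ∃ u ∈ G.free c, G.HasWon p (c.claim p u) ∨ ∃ j < k, AwaitsReply G p j (c.claim p u) := by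
  cases h with
  | win u hu _ hwin => exact ⟨u, hu, .inl hwin⟩
  | step u hu _ hreply hpass => exact ⟨u, hu, .inr ⟨_, Nat.lt_succ_self _, hreply, hpass⟩⟩

theorem exists_reply_or_forall_lt_of_not (h : ¬ WinsDespitePasses G p k c)
    (hsafe : ¬ G.HasWon p.other c) {u : ℕ} (hu : u ∈ G.free c) :
    (∃ v ∈ G.free (c.claim p u), ¬ WinsDespitePasses G p k ((c.claim p u).claim p.other v)) ∨
      ∀ j < k, ¬ WinsDespitePasses G p j (c.claim p u) := by
  by_contra! hcon
  obtain ⟨hreply, j, hjk, hpass⟩ := hcon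
  obtain ⟨k, rfl⟩ := Nat.exists_eq_succ_of_ne_zero (by lia : k ≠ 0)
  exact h (.step u hu hsafe hreply (hpass.mono (by lia)))

theorem not_hasWon_gunion_other (h : WinsDespitePasses G p k c)
    (hlive : ∀ q, ¬ G'.HasWon q c) : ¬ (gunion G G').HasWon p.other c :=
  Game.hasWon_gunion.not.2 (not_or.2 ⟨h.not_hasWon_other, hlive _⟩)

end WinsDespitePasses

mutual

theorem WinsDespitePasses.on_gunion {G G' : Game} {p : Player} {k : ℕ} {c : Position}
    (hG : WellFormed G) (hG' : WellFormed G') (hdisj : Disjoint G.V G'.V)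
    (h : WinsDespitePasses G p k c) (hlive : ∀ q, ¬ G'.HasWon q c)
    (hslow : ∀ j < k, ¬ WinsDespitePasses G' p.other j c) :
    WinsDespitePasses (gunion G G') p k c := by
  have hsafe := h.not_hasWon_gunion_other hlive
  obtain ⟨u, hu, hwon | ⟨j, hjk, hawaits⟩⟩ := h.exists_move
  · exact .win u (Game.mem_free_gunion.2 (.inl hu)) hsafe (Game.hasWon_gunion.2 (.inl hwon))
  have huU : u ∈ (gunion G G').free c := Game.mem_free_gunion.2 (.inl hu)
  have huG' : u ∉ G'.V := Finset.disjoint_left.1 hdisj (Game.mem_free.1 hu).1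
  have hawaitsU : AwaitsReply (gunion G G') p j (c.claim p u) :=
    hawaits.on_gunion hG hG' hdisj
      (fun q ↦ (Game.hasWon_claim_of_notMem hG' huG').not.2 (hlive q))
      ((WinsDespitePasses.claim_iff_of_notMem hG' huG').not.2 (hslow j hjk))
  exact (hawaitsU.winsDespitePasses huU hsafe).mono hjk
termination_by (((gunion G G').free c).card, 0)
decreasing_by exact .left _ _ (Game.card_free_claim_lt huU)

theorem AwaitsReply.on_gunion {G G' : Game} {p : Player} {k : ℕ} {c : Position}
    (hG : WellFormed G) (hG' : WellFormed G') (hdisj : Disjoint G.V G'.V)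
    (h : AwaitsReply G p k c) (hlive : ∀ q, ¬ G'.HasWon q c)
    (hslow : ¬ WinsDespitePasses G' p.other k c) :
    AwaitsReply (gunion G G') p k c := by
  refine ⟨fun v hvU ↦ ?_,
    h.pass.on_gunion hG hG' hdisj hlive fun j hj hj' ↦ hslow (hj'.mono hj.le)⟩
  obtain hv | hv := Game.mem_free_gunion.1 hvU
  · have hvG' : v ∉ G'.V := Finset.disjoint_left.1 hdisj (Game.mem_free.1 hv).1
    exact (h.reply v hv).on_gunion hG hG' hdisj
      (fun q ↦ (Game.hasWon_claim_of_notMem hG' hvG').not.2 (hlive q))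
      fun j hj ↦ (WinsDespitePasses.claim_iff_of_notMem hG' hvG').not.2
        fun hj' ↦ hslow (hj'.mono (by lia))
  -- Picking `v` is a pass on `G`. Either some answer `w` on `G'` keeps the opponent from winning
  -- there within `k` passes, or `p` can leave `v` unanswered and the opponent still cannot win
  -- there within fewer than `k` passes.
  have hvG : v ∉ G.V := Finset.disjoint_right.1 hdisj (Game.mem_free.1 hv).1
  have h₁ : AwaitsReply G p k (c.claim p.other v) := h.claim_of_notMem hG hvG
  have hlive₁ : ∀ q, ¬ G'.HasWon q (c.claim p.other v) := by
    rw [Player.forall_iff p, Game.hasWon_claim_of_ne p.other_ne.symm]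
    exact ⟨hlive p, fun hwon ↦ hslow (.win v hv (hlive _) hwon)⟩
  obtain ⟨w, hw, hslow₂⟩ | hslow₁ :=
    WinsDespitePasses.exists_reply_or_forall_lt_of_not hslow (hlive _) hv
  · rw [Player.other_other] at hslow₂
    have hwU : w ∈ (gunion G G').free (c.claim p.other v) := Game.mem_free_gunion.2 (.inr hw)
    have hsafe := h₁.pass.not_hasWon_gunion_other hlive₁
    by_cases hwon : G'.HasWon p ((c.claim p.other v).claim p w)
    · exact .win w hwU hsafe (Game.hasWon_gunion.2 (.inr hwon))
    have hwG : w ∉ G.V := Finset.disjoint_right.1 hdisj (Game.mem_free.1 hw).1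
    have hlive₂ : ∀ q, ¬ G'.HasWon q ((c.claim p.other v).claim p w) := by
      rw [Player.forall_iff p, Game.hasWon_claim_of_ne p.other_ne]
      exact ⟨hwon, hlive₁ _⟩
    exact ((h₁.claim_of_notMem hG hwG).on_gunion hG hG' hdisj hlive₂ hslow₂).winsDespitePasses
      hwU hsafe
  · exact (h₁.pass.on_gunion hG hG' hdisj hlive₁ hslow₁).mono k.le_succ
-- The second component is for `h.pass`, which is about the same position `c`.
termination_by (((gunion G G').free c).card, 1)
decreasing_by
  · exact .left _ _ (Game.card_free_claim_lt hvU)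
  · exact .left _ _ ((Game.card_free_claim_lt hwU).trans (Game.card_free_claim_lt hvU))
  · exact .left _ _ (Game.card_free_claim_lt hvU)
  · exact .right _ Nat.zero_lt_one

end

theorem mover_succ (s : Player) (n : ℕ) : mover s (n + 1) = (mover s n).other := by
  rcases n.even_or_odd with hn | hn <;> cases s <;>
    simp [mover, Player.other, Nat.even_iff.1, Nat.odd_iff.1, *]

/-- The position reached after the history `h` when `s` moved first. -/
def position (s : Player) (h : List ℕ) : Position := fun p ↦ picked s p h

section History

variable {G : Game} {s p : Player} {σ : Strategy} {h : List ℕ} {x : ℕ}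

theorem position_nil : position s [] = ⊥ := by
  funext p
  simp [position, picked]

theorem position_concat :
    position s (h ++ [x]) = (position s h).claim (mover s h.length) x := by
  ext p y
  simp only [position, picked, Position.mem_claim, Finset.mem_image, Finset.mem_filter,
    Finset.mem_range, List.length_append, List.length_singleton, Nat.lt_succ_iff_lt_or_eq]
  grind [List.getD_append]

theorem mem_iff_exists_mem_position : x ∈ h ↔ ∃ p, x ∈ position s h p := by
  induction h using List.reverseRecOn with
  | nil => simp [position_nil]
  | append_singleton h y ih =>
    simp only [List.mem_append, List.mem_singleton, ih, position_concat, Position.mem_claim,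
      exists_or, exists_eq_left, or_comm]

theorem ended_iff : ended G s h ↔ ∃ p, G.HasWon p (position s h) := by
  refine ⟨fun he ↦ he.elim (⟨.L, ·⟩) (⟨.R, ·⟩), ?_⟩
  rintro ⟨_ | _, hwon⟩
  exacts [.inl hwon, .inr hwon]

theorem mem_free_position : x ∈ G.free (position s h) ↔ x ∈ G.V ∧ x ∉ h := by
  rw [Game.mem_free, mem_iff_exists_mem_position (s := s), not_exists]

theorem validHist_concat :
    ValidHist G s (h ++ [x]) ↔
      ValidHist G s h ∧ ¬ ended G s h ∧ x ∈ G.free (position s h) := by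
  have hbefore : (∀ k < (h ++ [x]).length, ¬ ended G s ((h ++ [x]).take k)) ↔
      (∀ k < h.length, ¬ ended G s (h.take k)) ∧ ¬ ended G s h := by
    rw [List.length_append, List.length_singleton, Nat.forall_lt_succ_right, List.take_left]
    exact and_congr_left' <| forall₂_congr fun k hk ↦ by
      rw [List.take_append_of_le_length hk.le]
  have hnodup : (h ++ [x]).Nodup ↔ h.Nodup ∧ x ∉ h := by
    rw [← List.concat_eq_append, List.nodup_concat, and_comm]
  simp only [ValidHist, hbefore, hnodup, mem_free_position, List.forall_mem_append,
    List.forall_mem_singleton]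
  tauto

theorem follows_concat :
    Follows s p σ (h ++ [x]) ↔ Follows s p σ h ∧ (mover s h.length = p → x = σ h) := by
  rw [Follows, List.length_append, List.length_singleton, Nat.forall_lt_succ_right, List.take_left,
    List.getD_append_right _ _ _ _ le_rfl, Nat.sub_self, List.getD_cons_zero]
  exact and_congr_left' <| forall₂_congr fun k hk ↦ by
    rw [List.take_append_of_le_length hk.le, List.getD_append _ _ _ _ hk]

theorem ValidHist.length_le (hv : ValidHist G s h) : h.length ≤ G.V.card := by
  rw [← List.toFinset_card_of_nodup hv.1]
  exact Finset.card_le_card fun x hx ↦ hv.2.1 x (List.mem_toFinset.1 hx)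

theorem ValidHist.free_nonempty_iff (hv : ValidHist G s h) :
    (G.free (position s h)).Nonempty ↔ h.length < G.V.card := by
  have hsub : h.toFinset ⊆ G.V := fun x hx ↦ hv.2.1 x (List.mem_toFinset.1 hx)
  have hfree : G.free (position s h) = G.V \ h.toFinset := by
    ext x
    simp only [mem_free_position, Finset.mem_sdiff, List.mem_toFinset]
  rw [hfree, ← Finset.card_pos, Finset.card_sdiff_of_subset hsub, List.toFinset_card_of_nodup hv.1,
    Nat.sub_pos_iff_lt]

end History

/-- The strategy `σ` of player `p` wins `G` when `s` moves first. -/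
def IsWinningStrategy (G : Game) (s p : Player) (σ : Strategy) : Prop :=
  Legal G s p σ ∧ ∀ h, ValidHist G s h → Follows s p σ h → Complete G s h →
    G.HasWon p (position s h)

/-- A legal history in which `p` has followed `σ` and the game has not ended yet. -/
structure OngoingPlay (G : Game) (s p : Player) (σ : Strategy) (h : List ℕ) : Prop where
  valid : ValidHist G s h
  follows : Follows s p σ h
  not_ended : ¬ ended G s h

namespace IsWinningStrategy

variable {G : Game} {s p : Player} {σ : Strategy} {h : List ℕ} {x : ℕ}

theorem free_nonempty (hσ : IsWinningStrategy G s p σ) (hh : OngoingPlay G s p σ h) :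
    (G.free (position s h)).Nonempty := by
  by_contra hfull
  have hlen : h.length = G.V.card :=
    le_antisymm hh.valid.length_le (not_lt.1 (hh.valid.free_nonempty_iff.not.1 hfull))
  exact hh.not_ended (ended_iff.2 ⟨p, hσ.2 h hh.valid hh.follows (.inr hlen)⟩)

theorem apply_mem_free (hσ : IsWinningStrategy G s p σ) (hh : OngoingPlay G s p σ h)
    (hm : mover s h.length = p) : σ h ∈ G.free (position s h) :=
  mem_free_position.2 <| hσ.1 h hh.valid hh.follows hh.not_ended
    (hh.valid.free_nonempty_iff.1 (hσ.free_nonempty hh)) hm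

theorem hasWon_or_ongoingPlay_concat (hσ : IsWinningStrategy G s p σ)
    (hh : OngoingPlay G s p σ h) (hx : x ∈ G.free (position s h))
    (hxσ : mover s h.length = p → x = σ h) :
    G.HasWon p (position s (h ++ [x])) ∨ OngoingPlay G s p σ (h ++ [x]) := by
  have hv : ValidHist G s (h ++ [x]) := validHist_concat.2 ⟨hh.valid, hh.not_ended, hx⟩
  have hf : Follows s p σ (h ++ [x]) := follows_concat.2 ⟨hh.follows, hxσ⟩
  by_cases he : ended G s (h ++ [x])
  · exact .inl (hσ.2 _ hv hf (.inl he))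
  · exact .inr ⟨hv, hf, he⟩

theorem ongoingPlay_concat_of_ne (hσ : IsWinningStrategy G s p σ) (hh : OngoingPlay G s p σ h)
    (hx : x ∈ G.free (position s h)) (hm : mover s h.length ≠ p) :
    OngoingPlay G s p σ (h ++ [x]) := by
  refine (hσ.hasWon_or_ongoingPlay_concat hh hx (absurd · hm)).resolve_left fun hwon ↦ ?_
  rw [position_concat, Game.hasWon_claim_of_ne hm.symm] at hwon
  exact hh.not_ended (ended_iff.2 ⟨p, hwon⟩)

theorem winsDespitePasses (hG : WellFormed G) (hσ : IsWinningStrategy G s p σ) {k : ℕ}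
    (hh : OngoingPlay G s p σ h) (hm : mover s h.length = p) (hk : G.V.card ≤ h.length + k) :
    WinsDespitePasses G p k (position s h) := by
  induction k generalizing h with
  | zero => exact absurd (hh.valid.free_nonempty_iff.1 (hσ.free_nonempty hh)) (not_lt.2 hk)
  | succ k ih =>
    have hsafe : ¬ G.HasWon p.other (position s h) := fun hwon ↦
      hh.not_ended (ended_iff.2 ⟨_, hwon⟩)
    have hu := hσ.apply_mem_free hh hm
    have hpos : position s (h ++ [σ h]) = (position s h).claim p (σ h) := by
      rw [position_concat, hm]
    rcases hσ.hasWon_or_ongoingPlay_concat hh hu fun _ ↦ rfl with hwon | hh'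
    · exact .win _ hu hsafe (hpos ▸ hwon)
    have hm' : mover s (h ++ [σ h]).length = p.other := by
      rw [List.length_append, List.length_singleton, mover_succ, hm]
    have hreply : ∀ v ∈ G.free ((position s h).claim p (σ h)),
        WinsDespitePasses G p k (((position s h).claim p (σ h)).claim p.other v) := by
      intro v hv
      rw [← hpos] at hv ⊢
      rw [← hm', ← position_concat]
      refine ih (hσ.ongoingPlay_concat_of_ne hh' hv (hm' ▸ p.other_ne)) ?_ ?_
      · rw [List.length_append, List.length_singleton, mover_succ, hm', p.other_other]
      · simp only [List.length_append, List.length_singleton]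
        lia
    refine .step _ hu hsafe (fun v hv ↦ (hreply v hv).mono k.le_succ) ?_
    -- After a pass, `p` pretends that the opponent has picked an arbitrary vertex `w`.
    obtain ⟨w, hw⟩ := hpos ▸ hσ.free_nonempty hh'
    exact (hreply w hw).anti_position hG
      (fun x _ ↦ by rw [Position.claim_of_ne p.other_ne.symm])
      fun x _ hx ↦ Position.mem_claim.2 (.inr hx)

end IsWinningStrategy

theorem WinsAs.exists_winsDespitePasses {G : Game} {p : Player} (hG : WellFormed G)
    (hp : WinsAs G p p) : ∃ k, WinsDespitePasses G p k ⊥ := by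
  obtain ⟨σ, hσ⟩ : ∃ σ, IsWinningStrategy G p p σ := hp
  have hstart : OngoingPlay G p p σ [] := by
    refine ⟨⟨by simp, by simp, by simp⟩, fun k hk ↦ by simp at hk, ?_⟩
    rw [ended_iff, position_nil, not_exists]
    exact fun _ ↦ Game.not_hasWon_bot hG
  exact ⟨G.V.card, position_nil (s := p) ▸
    hσ.winsDespitePasses hG hstart rfl (Nat.le_add_left _ _)⟩

/-- The invariant kept by a player `p` who plays by `WinsDespitePasses`: either `p` has won after
the history `h`, or `p` is still bound to win from the current position. -/
def OnTrack (G : Game) (s p : Player) (h : List ℕ) : Prop :=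
  G.HasWon p (position s h) ∨
    (mover s h.length = p ∧ ∃ k, WinsDespitePasses G p k (position s h)) ∨
    (mover s h.length = p.other ∧ ∃ k, AwaitsReply G p k (position s h))

namespace OnTrack

variable {G : Game} {s p : Player} {h : List ℕ} {x : ℕ}

theorem exists_winsDespitePasses (hh : OnTrack G s p h) (hwon : ¬ G.HasWon p (position s h)) :
    ∃ k, WinsDespitePasses G p k (position s h) := by
  rcases hh.resolve_left hwon with ⟨-, k, hk⟩ | ⟨-, k, hk⟩
  exacts [⟨k, hk⟩, ⟨k, hk.pass⟩]

theorem hasWon_of_complete (hh : OnTrack G s p h) (hv : ValidHist G s h)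
    (hc : Complete G s h) : G.HasWon p (position s h) := by
  by_contra hwon
  obtain ⟨k, hk⟩ := hh.exists_winsDespitePasses hwon
  rcases hc with he | hlen
  · obtain ⟨q, hq⟩ := ended_iff.1 he
    rcases p.eq_or_eq_other q with rfl | rfl
    exacts [hwon hq, hk.not_hasWon_other hq]
  · exact (hv.free_nonempty_iff.1 hk.free_nonempty).ne hlen

theorem concat (hh : OnTrack G s p h) (hwon : ¬ G.HasWon p (position s h))
    (hx : x ∈ G.free (position s h))
    (hmove : mover s h.length = p → G.HasWon p ((position s h).claim p x) ∨
      ∃ k, AwaitsReply G p k ((position s h).claim p x)) : OnTrack G s p (h ++ [x]) := by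
  unfold OnTrack
  rw [position_concat, List.length_append, List.length_singleton, mover_succ]
  rcases hh.resolve_left hwon with ⟨hm, -⟩ | ⟨hm, k, hk⟩
  · rw [hm]
    exact (hmove hm).imp_right fun h ↦ .inr ⟨rfl, h⟩
  · rw [hm]
    exact .inr (.inl ⟨p.other_other, k + 1, hk.reply x hx⟩)

end OnTrack

theorem WinsDespitePasses.winsAs {G : Game} {p : Player} {k : ℕ}
    (h : WinsDespitePasses G p k ⊥) : WinsAs G p p := by
  choose! move hfree hmove using fun (c : Position) (hc : ∃ k, WinsDespitePasses G p k c) ↦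
    hc.choose_spec.exists_move
  let σ : Strategy := fun h ↦ move (position p h)
  have htrack : ∀ h, ValidHist G p h → Follows p p σ h → OnTrack G p p h := by
    intro h hv hf
    induction h using List.reverseRecOn with
    | nil => exact .inr (.inl ⟨rfl, k, position_nil (s := p) ▸ ‹_›⟩)
    | append_singleton h x ih =>
      obtain ⟨hv, he, hx⟩ := validHist_concat.1 hv
      obtain ⟨hf, hxσ⟩ := follows_concat.1 hf
      have hwon : ¬ G.HasWon p (position p h) := fun hw ↦ he (ended_iff.2 ⟨p, hw⟩)
      refine (ih hv hf).concat hwon hx fun hm ↦ ?_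
      rw [hxσ hm]
      exact (hmove _ ((ih hv hf).exists_winsDespitePasses hwon)).imp_right
        fun ⟨j, _, hj⟩ ↦ ⟨j, hj⟩
  refine ⟨σ, fun h hv hf he _ _ ↦ ?_, fun h hv hf hc ↦ (htrack h hv hf).hasWon_of_complete hv hc⟩
  have hwon : ¬ G.HasWon p (position p h) := fun hw ↦ he (ended_iff.2 ⟨p, hw⟩)
  exact mem_free_position.1 (hfree _ ((htrack h hv hf).exists_winsDespitePasses hwon))

theorem WinsDespitePasses.winsAs_gunion {G G' : Game} {p : Player} {k : ℕ} (hG : WellFormed G)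
    (hG' : WellFormed G') (hdisj : Disjoint G.V G'.V) (h : WinsDespitePasses G p k ⊥)
    (hslow : ∀ j < k, ¬ WinsDespitePasses G' p.other j ⊥) : WinsAs (gunion G G') p p :=
  (h.on_gunion hG hG' hdisj (fun _ ↦ Game.not_hasWon_bot hG') hslow).winsAs

/-- If Left wins `G` as first player and Right wins `G'` as first player, then on the
disjoint union one of the two players has a winning strategy as first player. -/
theorem union_some_first_player_win (G G' : Game) (hG : WellFormed G) (hG' : WellFormed G')
    (hdisj : Disjoint G.V G'.V)
    (hL : WinsAs G .L .L) (hR : WinsAs G' .R .R) :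
    WinsAs (gunion G G') .L .L ∨ WinsAs (gunion G G') .R .R := by
  classical
  have hk := hL.exists_winsDespitePasses hG
  have hk' := hR.exists_winsDespitePasses hG'
  rcases le_total (Nat.find hk) (Nat.find hk') with hle | hle
  · exact .inl ((Nat.find_spec hk).winsAs_gunion hG hG' hdisj
      fun j hj ↦ Nat.find_min hk' (hj.trans_le hle))
  · rw [gunion_comm]
    exact .inr ((Nat.find_spec hk').winsAs_gunion hG' hG hdisj.symm
      fun j hj ↦ Nat.find_min hk (hj.trans_le hle))

end APG
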